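/- In the Nehari setting, define Ψ̂ : H¹(V)\{0} → ℝ by Ψ̂(w) = Φ(m̂(w)), where m̂(w) = s_w w and s_w > 0 is the unique value with Φ'(s_w w)(s_w w) = 0. Then Ψ̂ is continuously differentiable on H¹(V)\{0} and Ψ̂'(w)z = (‖m̂(w)‖/‖w‖) · Φ'(m̂(w))z for all w ∈ H¹(V)\{0} and all z ∈ H¹(V). -/

import Mathlib

open scoped ENNReal

noncomputable section

/-- `H¹(V)`: as a set, the ℓ²-summable real functions on the vertex set;
the `H¹` norm is equivalent to the ℓ² norm by the uniform degree bound. -/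
abbrev H1 (Vtx : Type*) := lp (fun _ : Vtx => ℝ) 2

variable {Vtx : Type*}

/-- `Γ(u,v)(x) = (1/2) Σ_{y∼x} (u(y)-u(x))(v(y)-v(x))`. -/
def gammaProd (adj : Vtx → Vtx → Prop) (u v : Vtx → ℝ) (x : Vtx) : ℝ :=
  (1/2) * ∑' y : {y : Vtx // adj x y}, (u y.1 - u x) * (v y.1 - v x)

/-- `|∇u|²(x) = (1/2) Σ_{y∼x} (u(y)-u(x))²`. -/
def gradSq (adj : Vtx → Vtx → Prop) (u : Vtx → ℝ) (x : Vtx) : ℝ :=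
  gammaProd adj u u x

/-- `Δu(x) = Σ_{y∼x} (u(y)-u(x))`. -/
def graphLap (adj : Vtx → Vtx → Prop) (u : Vtx → ℝ) (x : Vtx) : ℝ :=
  ∑' y : {y : Vtx // adj x y}, (u y.1 - u x)

/-- the norm `‖u‖` induced by the potential `V`:
`‖u‖² = Σ_x (|∇u|²(x) + V(x)u(x)²)`. -/
def nrmV (adj : Vtx → Vtx → Prop) (Vp : Vtx → ℝ) (u : Vtx → ℝ) : ℝ :=
  Real.sqrt (∑' x, (gradSq adj u x + Vp x * (u x)^2))

/-- the `V`-norm of an element of `H¹`. -/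
def nrmH (adj : Vtx → Vtx → Prop) (Vp : Vtx → ℝ) (u : H1 Vtx) : ℝ :=
  nrmV adj Vp (fun y => u y)

/-- `⟨u,v⟩ = Σ_x (Γ(u,v)(x) + V(x)u(x)v(x))`. -/
def iprodH (adj : Vtx → Vtx → Prop) (Vp : Vtx → ℝ) (u v : H1 Vtx) : ℝ :=
  ∑' x, (gammaProd adj (fun y => u y) (fun y => v y) x + Vp x * u x * v x)

/-- the variational functional `Φ(u) = ½‖u‖² − Σ_x F(x,u(x))`. -/
def PhiF (adj : Vtx → Vtx → Prop) (Vp : Vtx → ℝ) (F : Vtx → ℝ → ℝ) (u : H1 Vtx) : ℝ :=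
  (1/2) * ∑' x, (gradSq adj (fun y => u y) x + Vp x * (u x)^2) - ∑' x, F x (u x)

/-- the Nehari manifold `N = {u ∈ H¹\{0} : Φ'(u)u = 0}`. -/
def Nehari (adj : Vtx → Vtx → Prop) (Vp : Vtx → ℝ) (F : Vtx → ℝ → ℝ) : Set (H1 Vtx) :=
  {u | u ≠ 0 ∧ fderiv ℝ (PhiF adj Vp F) u u = 0}

/-- adjacency of the lattice graph `ℤ^N`. -/
def adjZ (N : ℕ) (x y : Fin N → ℤ) : Prop := (∑ i, (x i - y i).natAbs) = 1

end

/-!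
The functional `Φ` is `C¹` on `ℓ²`: its quadratic part is `½‖A u‖²` for a bounded linear map `A`,
and its nonlinear part has as gradient the Nemytskii operator of `f`, which is continuous.

Since `f(x, ·) / |·|` is increasing, `t ↦ Φ'(t w) w / t` is decreasing. Hence `Φ'(t w) w` changes
sign from positive to negative at `t = s_w`, so that `s_w w` maximizes `Φ` on its ray; and as the
signs of `Φ'(t v) v` on the two sides of `s_w` persist for `v` near `w`, the scaling `s` is
continuous. It need not be differentiable, but maximality gives the envelope bounds
`Φ(s_w v) - Φ(s_w w) ≤ Ψ̂(v) - Ψ̂(w) ≤ Φ(s_v v) - Φ(s_v w)`, where both outer terms have derivative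
`s_w Φ'(s_w w)` at `v = w`. Finally `s_w = ‖m̂(w)‖ / ‖w‖`.
-/

section NehariScaling

open Asymptotics Filter Topology

variable {E G : Type*} [NormedAddCommGroup E] [NormedSpace ℝ E]
  [NormedAddCommGroup G] [NormedSpace ℝ G]

theorem sign_eq_sign_sub_of_antitoneOn {h : ℝ → ℝ} {S : Set ℝ} {c t : ℝ} (hh : AntitoneOn h S)
    (hc : c ∈ S) (h0 : h c = 0) (huniq : ∀ r ∈ S, h r = 0 → r = c) (ht : t ∈ S) :
    SignType.sign (h t) = SignType.sign (c - t) := by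
  rcases lt_trichotomy t c with htc | rfl | hct
  · have hne : h t ≠ 0 := fun h1 => htc.ne (huniq t ht h1)
    have hnonneg : 0 ≤ h t := h0 ▸ hh ht hc htc.le
    rw [sign_pos (hnonneg.lt_of_ne' hne), sign_pos (sub_pos.2 htc)]
  · rw [h0, sub_self]
  · have hne : h t ≠ 0 := fun h1 => hct.ne' (huniq t ht h1)
    have hnonpos : h t ≤ 0 := h0 ▸ hh hc ht hct.le
    rw [sign_neg (hnonpos.lt_of_ne hne), sign_neg (sub_neg.2 hct)]

theorem isMaxOn_of_sign_deriv_eq {φ φ' : ℝ → ℝ} {S : Set ℝ} {c : ℝ} (hS : S.OrdConnected)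
    (hc : c ∈ S) (hφ : ∀ t ∈ S, HasDerivAt φ (φ' t) t)
    (hsign : ∀ t ∈ S, SignType.sign (φ' t) = SignType.sign (c - t)) : IsMaxOn φ S c := by
  intro t ht
  rcases le_total t c with htc | hct
  · have hsub : Set.Icc t c ⊆ S := hS.out ht hc
    refine monotoneOn_of_hasDerivWithinAt_nonneg (convex_Icc t c) (f' := φ')
      (fun r hr => (hφ r (hsub hr)).continuousAt.continuousWithinAt)
      (fun r hr => (hφ r (hsub (interior_subset hr))).hasDerivWithinAt) (fun r hr => ?_)
      (Set.left_mem_Icc.2 htc) (Set.right_mem_Icc.2 htc) htc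
    rw [← sign_nonneg_iff, hsign r (hsub (interior_subset hr)), sign_nonneg_iff, sub_nonneg]
    exact (interior_subset hr).2
  · have hsub : Set.Icc c t ⊆ S := hS.out hc ht
    refine antitoneOn_of_hasDerivWithinAt_nonpos (convex_Icc c t) (f' := φ')
      (fun r hr => (hφ r (hsub hr)).continuousAt.continuousWithinAt)
      (fun r hr => (hφ r (hsub (interior_subset hr))).hasDerivWithinAt) (fun r hr => ?_)
      (Set.left_mem_Icc.2 hct) (Set.right_mem_Icc.2 hct) hct
    rw [← sign_nonpos_iff, hsign r (hsub (interior_subset hr)), sign_nonpos_iff, sub_nonpos]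
    exact (interior_subset hr).1

theorem hasFDerivAt_of_le_of_le {φ lower upper : E → ℝ} {L : E →L[ℝ] ℝ} {w : E}
    (hl : HasFDerivAt lower L w) (hu : HasFDerivAt upper L w)
    (hlw : lower w = φ w) (huw : upper w = φ w)
    (hle : ∀ᶠ v in 𝓝 w, lower v ≤ φ v) (hge : ∀ᶠ v in 𝓝 w, φ v ≤ upper v) :
    HasFDerivAt φ L w := by
  rw [hasFDerivAt_iff_isLittleO] at hl hu ⊢
  refine IsBigO.trans_isLittleO (.of_bound' ?_) (hl.norm_left.add hu.norm_left)
  filter_upwards [hle, hge] with v hlv huv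
  rw [hlw, huw]
  simp only [Real.norm_eq_abs]
  refine (abs_le_max_abs_abs (sub_le_sub_right (sub_le_sub_right hlv _) _)
    (sub_le_sub_right (sub_le_sub_right huv _) _)).trans
    ((max_le_add_of_nonneg (abs_nonneg _) (abs_nonneg _)).trans (le_abs_self _))

theorem hasFDerivAt_smul_sub_smul {Φ : E → G} {L : E →L[ℝ] G} {s : E → ℝ} {w : E}
    (hΦ : HasStrictFDerivAt Φ L (s w • w)) (hs : ContinuousAt s w) :
    HasFDerivAt (fun v => Φ (s v • v) - Φ (s v • w)) (s w • L) w := by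
  have hpair : Tendsto (fun v => (s v • v, s v • w)) (𝓝 w) (𝓝 (s w • w, s w • w)) :=
    (hs.smul continuousAt_id).prodMk_nhds (hs.smul continuousAt_const)
  have hbigO : (fun v => s v • v - s v • w) =O[𝓝 w] fun v => v - w := by
    simpa only [← smul_sub, one_smul] using
      (hs.isBigO_one ℝ).smul (isBigO_refl (fun v => v - w) (𝓝 w))
  have hstrict : (fun v => Φ (s v • v) - Φ (s v • w) - L (s v • v - s v • w)) =o[𝓝 w]
      fun v => v - w :=
    (hΦ.isLittleO.comp_tendsto hpair).trans_isBigO hbigO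
  have hscale : (fun v => (s v - s w) • L (v - w)) =o[𝓝 w] fun v => v - w := by
    have hsmall : (fun v => s v - s w) =o[𝓝 w] fun _ => (1 : ℝ) :=
      (isLittleO_one_iff ℝ).2 (tendsto_sub_nhds_zero_iff.2 hs)
    simpa only [one_smul] using hsmall.smul_isBigO (L.isBigO_sub (𝓝 w) w)
  rw [hasFDerivAt_iff_isLittleO]
  refine (hstrict.add hscale).congr_left fun v => ?_
  simp only [← smul_sub, map_smul, sub_smul, smul_apply]
  abel

/-- `s` is a *Nehari scaling* for `Φ`: `t = s w` is the only critical point of `t ↦ Φ (t • w)` on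
`(0, ∞)`, for each `w ≠ 0`, and that fibre map increases before it and decreases after it. Thus
`w ↦ s w • w` is the map `m̂` of the paper. -/
structure IsNehariScaling (Φ : E → ℝ) (s : E → ℝ) : Prop where
  pos : ∀ w ≠ 0, 0 < s w
  sign_fderiv : ∀ w ≠ 0, ∀ t > 0, SignType.sign (fderiv ℝ Φ (t • w) w) = SignType.sign (s w - t)

namespace IsNehariScaling

variable {Φ : E → ℝ} {s : E → ℝ}

theorem of_antitoneOn
    (hanti : ∀ w ≠ 0, AntitoneOn (fun t : ℝ => fderiv ℝ Φ (t • w) w / t) (Set.Ioi 0))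
    (hs : ∀ w ≠ 0, 0 < s w ∧ fderiv ℝ Φ (s w • w) (s w • w) = 0 ∧
      ∀ t : ℝ, 0 < t → fderiv ℝ Φ (t • w) (t • w) = 0 → t = s w) :
    IsNehariScaling Φ s where
  pos w hw := (hs w hw).1
  sign_fderiv w hw t ht := by
    obtain ⟨hpos, hzero, huniq⟩ := hs w hw
    have hiff : ∀ r > 0, fderiv ℝ Φ (r • w) w / r = 0 ↔ fderiv ℝ Φ (r • w) (r • w) = 0 :=
      fun r hr => by simp [hr.ne']
    rw [← sign_eq_sign_sub_of_antitoneOn (hanti w hw) hpos ((hiff _ hpos).2 hzero)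
      (fun r hr h => huniq r hr ((hiff r hr).1 h)) ht, div_eq_mul_inv, sign_mul,
      sign_pos (inv_pos.2 ht), mul_one]

theorem apply_smul_le (hs : IsNehariScaling Φ s) (hΦ : Differentiable ℝ Φ) {w : E} (hw : w ≠ 0)
    {t : ℝ} (ht : 0 < t) : Φ (t • w) ≤ Φ (s w • w) := by
  have hray (r : ℝ) : HasDerivAt (fun r : ℝ => Φ (r • w)) (fderiv ℝ Φ (r • w) w) r := by
    have hline : HasDerivAt (fun r : ℝ => r • w) w r := by
      simpa only [id, one_smul] using (hasDerivAt_id r).smul_const w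
    exact (hΦ (r • w)).hasFDerivAt.comp_hasDerivAt r hline
  exact isMaxOn_of_sign_deriv_eq Set.ordConnected_Ioi (hs.pos w hw) (fun r _ => hray r)
    (hs.sign_fderiv w hw) ht

theorem continuousAt (hs : IsNehariScaling Φ s) (hΦ : ContDiff ℝ 1 Φ) {w : E} (hw : w ≠ 0) :
    ContinuousAt s w := by
  have hfib (b : ℝ) : ContinuousAt (fun v => fderiv ℝ Φ (b • v) v) w :=
    ((hΦ.continuous_fderiv one_ne_zero).comp (continuous_const_smul b)).clm_apply
      continuous_id |>.continuousAt
  refine tendsto_order.2 ⟨fun b hb => ?_, fun b hb => ?_⟩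
  · rcases le_or_gt b 0 with hb0 | hb0
    · filter_upwards [eventually_ne_nhds hw] with v hv using hb0.trans_lt (hs.pos v hv)
    · have hpos : 0 < fderiv ℝ Φ (b • w) w := by
        rwa [← sign_eq_one_iff, hs.sign_fderiv w hw b hb0, sign_eq_one_iff, sub_pos]
      filter_upwards [eventually_ne_nhds hw, (hfib b).eventually_const_lt hpos] with v hv hvpos
      rwa [← sign_eq_one_iff, hs.sign_fderiv v hv b hb0, sign_eq_one_iff, sub_pos] at hvpos
  · have hb0 : 0 < b := (hs.pos w hw).trans hb
    have hneg : fderiv ℝ Φ (b • w) w < 0 := by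
      rwa [← sign_eq_neg_one_iff, hs.sign_fderiv w hw b hb0, sign_eq_neg_one_iff, sub_neg]
    filter_upwards [eventually_ne_nhds hw, (hfib b).eventually_lt_const hneg] with v hv hvneg
    rwa [← sign_eq_neg_one_iff, hs.sign_fderiv v hv b hb0, sign_eq_neg_one_iff, sub_neg] at hvneg

theorem hasFDerivAt (hs : IsNehariScaling Φ s) (hΦ : ContDiff ℝ 1 Φ) {w : E} (hw : w ≠ 0) :
    HasFDerivAt (fun v => Φ (s v • v)) (s w • fderiv ℝ Φ (s w • w)) w := by
  have hdiff : Differentiable ℝ Φ := hΦ.differentiable one_ne_zero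
  have hlower : HasFDerivAt (fun v => Φ (s w • v)) (s w • fderiv ℝ Φ (s w • w)) w := by
    refine ((hdiff (s w • w)).hasFDerivAt.comp w
      ((hasFDerivAt_id w).const_smul (s w))).congr_fderiv ?_
    ext z
    simp
  have hupper : HasFDerivAt (fun v => Φ (s v • v) - Φ (s v • w) + Φ (s w • w))
      (s w • fderiv ℝ Φ (s w • w)) w :=
    (hasFDerivAt_smul_sub_smul (hΦ.hasStrictFDerivAt one_ne_zero)
      (hs.continuousAt hΦ hw)).add_const _
  refine hasFDerivAt_of_le_of_le hlower hupper rfl (by simp) ?_ ?_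
  · filter_upwards [eventually_ne_nhds hw] with v hv
    exact hs.apply_smul_le hdiff hv (hs.pos w hw)
  · filter_upwards [eventually_ne_nhds hw] with v hv
    linarith [hs.apply_smul_le hdiff hw (hs.pos v hv)]

theorem contDiffOn (hs : IsNehariScaling Φ s) (hΦ : ContDiff ℝ 1 Φ) :
    ContDiffOn ℝ 1 (fun v => Φ (s v • v)) {w | w ≠ 0} := by
  rw [← zero_add 1, contDiffOn_succ_iff_fderiv_of_isOpen isOpen_ne, contDiffOn_zero]
  refine ⟨fun w hw => (hs.hasFDerivAt hΦ hw).differentiableAt.differentiableWithinAt, by simp,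
    ContinuousOn.congr (fun w hw => ?_) fun w hw => (hs.hasFDerivAt hΦ hw).fderiv⟩
  have hsw : ContinuousAt s w := hs.continuousAt hΦ hw
  exact (hsw.smul ((hΦ.continuous_fderiv one_ne_zero).continuousAt.comp
    (hsw.smul continuousAt_id))).continuousWithinAt

end IsNehariScaling

end NehariScaling

section LpConvergence

open Filter Topology
open scoped lp

variable {ι α : Type*} {l : Filter α} {p : ℝ≥0∞} [Fact (1 ≤ p)]
  {E G : ι → Type*} [∀ i, NormedAddCommGroup (E i)] [∀ i, NormedAddCommGroup (G i)]

theorem tendsto_lp_of_norm_sub_le (hp : p ≠ ∞) {w : α → lp G p} {h : lp G p} {b : ι → ℝ}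
    (hb : Memℓp b p) (hbound : ∀ᶠ n in l, ∀ i, ‖w n i - h i‖ ≤ b i)
    (hlim : ∀ i, Tendsto (fun n => w n i) l (𝓝 (h i))) : Tendsto w l (𝓝 h) := by
  have hp0 : 0 < p.toReal := ENNReal.toReal_pos (zero_lt_one.trans_le Fact.out).ne' hp
  have hterm (i : ι) : Tendsto (fun n => ‖w n i - h i‖ ^ p.toReal) l (𝓝 0) := by
    simpa only [Real.zero_rpow hp0.ne'] using
      (tendsto_iff_norm_sub_tendsto_zero.1 (hlim i)).rpow_const (Or.inr hp0.le)
  have hpow : Tendsto (fun n => ‖w n - h‖ ^ p.toReal) l (𝓝 0) := by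
    simp only [lp.norm_rpow_eq_tsum hp0]
    rw [← tsum_zero (β := ι)]
    refine tendsto_tsum_of_dominated_convergence (hb.summable hp0) hterm ?_
    filter_upwards [hbound] with n hn i
    rw [Real.norm_of_nonneg (by positivity)]
    exact Real.rpow_le_rpow (norm_nonneg _) ((hn i).trans (Real.le_norm_self _)) hp0.le
  have hroot := hpow.rpow_const (p := p.toReal⁻¹) (Or.inr (inv_nonneg.2 hp0.le))
  rw [tendsto_iff_norm_sub_tendsto_zero]
  simpa only [Real.rpow_rpow_inv (norm_nonneg _) hp0.ne',
    Real.zero_rpow (inv_ne_zero hp0.ne')] using hroot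

theorem tendsto_lp_of_norm_le (hp : p ≠ ∞) {C : ℝ} (hC : 0 ≤ C) {v : α → lp E p} {u : lp E p}
    {g : α → lp G p} {h : lp G p} (hv : Tendsto v l (𝓝 u))
    (hbound : ∀ᶠ n in l, ∀ i, ‖g n i‖ ≤ C * ‖v n i‖) (hh : ∀ i, ‖h i‖ ≤ C * ‖u i‖)
    (hlim : ∀ i, Tendsto (fun n => g n i) l (𝓝 (h i))) : Tendsto g l (𝓝 h) := by
  have hp0 : p ≠ 0 := (zero_lt_one.trans_le Fact.out).ne'
  have hu : Memℓp (fun i => 2 * C * ‖u i‖) p := (lp.memℓp u).norm.const_mul (2 * C)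
  have hnorm (i : ι) : Tendsto (fun n => ‖g n i - h i‖) l (𝓝 0) :=
    tendsto_iff_norm_sub_tendsto_zero.1 (hlim i)
  -- `‖g n - h‖ ≤ m n + C ‖v n - u‖` pointwise, where the truncation `m n` of `‖g n - h‖` at
  -- `2 C ‖u‖` has a dominating function that does not depend on `n`.
  have hmin_nonneg (n : α) (i : ι) : 0 ≤ min ‖g n i - h i‖ (2 * C * ‖u i‖) := by positivity
  have hmin_norm_le (n : α) (i : ι) :
      ‖min ‖g n i - h i‖ (2 * C * ‖u i‖)‖ ≤ 2 * C * ‖u i‖ := by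
    rw [Real.norm_of_nonneg (hmin_nonneg n i)]
    exact min_le_right _ _
  let m (n : α) : ℓ^p(ι, ℝ) :=
    ⟨fun i => min ‖g n i - h i‖ (2 * C * ‖u i‖), hu.mono (hmin_norm_le n)⟩
  have hm : Tendsto m l (𝓝 0) := by
    refine tendsto_lp_of_norm_sub_le hp hu (.of_forall fun n i => ?_) fun i => ?_
    · simpa only [lp.coeFn_zero, Pi.zero_apply, sub_zero] using hmin_norm_le n i
    · exact squeeze_zero (hmin_nonneg · i) (fun n => min_le_left _ _) (hnorm i)
  have hle : ∀ᶠ n in l, ‖g n - h‖ ≤ ‖m n‖ + C * ‖v n - u‖ := by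
    filter_upwards [hbound] with n hn
    have hpt (i : ι) : ‖(g n - h) i‖ ≤ ‖(m n + C • lp.toNorm (v n - u)) i‖ := by
      refine le_trans ?_ (Real.le_norm_self _)
      change ‖g n i - h i‖ ≤ min ‖g n i - h i‖ (2 * C * ‖u i‖) + C * ‖v n i - u i‖
      rw [← min_add_add_right, le_min_iff]
      refine ⟨le_add_of_nonneg_right (by positivity), ?_⟩
      have htri := mul_le_mul_of_nonneg_left (norm_le_norm_add_norm_sub' (v n i) (u i)) hC
      linarith [norm_sub_le (g n i) (h i), hn i, hh i]
    calc ‖g n - h‖ ≤ ‖m n + C • lp.toNorm (v n - u)‖ := lp.norm_mono hp0 hpt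
      _ ≤ ‖m n‖ + ‖C • lp.toNorm (v n - u)‖ := norm_add_le _ _
      _ = ‖m n‖ + C * ‖v n - u‖ := by
        rw [norm_smul, Real.norm_of_nonneg hC, lp.norm_toNorm]
  rw [tendsto_iff_norm_sub_tendsto_zero]
  refine squeeze_zero' (.of_forall fun n => norm_nonneg _) hle ?_
  simpa only [mul_zero, add_zero] using (tendsto_zero_iff_norm_tendsto_zero.1 hm).add
    ((tendsto_iff_norm_sub_tendsto_zero.1 hv).const_mul C)

end LpConvergence

section Nemytskii

open scoped lp

variable {ι E G : Type*} [NormedAddCommGroup E] [NormedAddCommGroup G]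

/-- `f i t = O(‖t‖)`, uniformly in `i` and locally uniformly in `t`. This is the growth condition
under which the Nemytskii operator of `f` acts on the sequence spaces `ℓᵖ`, whose elements are
bounded. -/
def LinearGrowthOnBounded (f : ι → E → G) : Prop :=
  ∀ R : ℝ, ∃ C ≥ 0, ∀ i t, ‖t‖ ≤ R → ‖f i t‖ ≤ C * ‖t‖

theorem linearGrowthOnBounded_of_le_add_rpow {f : ι → E → G} {a q : ℝ} (ha : 0 ≤ a) (hq : 2 ≤ q)
    (hf : ∀ i t, ‖f i t‖ ≤ a * (‖t‖ + ‖t‖ ^ (q - 1))) : LinearGrowthOnBounded f := by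
  refine fun R => ⟨a * (1 + |R| ^ (q - 2)), by positivity, fun i t ht => ?_⟩
  have hsplit : ‖t‖ ^ (q - 1) = ‖t‖ ^ (q - 2) * ‖t‖ := by
    rw [← Real.rpow_add_one' (norm_nonneg t) (by linarith)]
    ring_nf
  have hpow : ‖t‖ ^ (q - 2) ≤ |R| ^ (q - 2) :=
    Real.rpow_le_rpow (norm_nonneg t) (ht.trans (le_abs_self R)) (by linarith)
  calc ‖f i t‖ ≤ a * ((1 + ‖t‖ ^ (q - 2)) * ‖t‖) := by rw [add_mul, one_mul, ← hsplit]; exact hf i t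
    _ ≤ a * ((1 + |R| ^ (q - 2)) * ‖t‖) := by gcongr
    _ = a * (1 + |R| ^ (q - 2)) * ‖t‖ := (mul_assoc _ _ _).symm

variable {p : ℝ≥0∞} [Fact (1 ≤ p)] {f : ι → E → G}

namespace LinearGrowthOnBounded

theorem exists_forall_norm_apply_le (hf : LinearGrowthOnBounded f) (R : ℝ) :
    ∃ C ≥ 0, ∀ u : ℓ^p(ι, E), ‖u‖ ≤ R → ∀ i, ‖f i (u i)‖ ≤ C * ‖u i‖ := by
  obtain ⟨C, hC, h⟩ := hf R
  exact ⟨C, hC, fun u hu i => h i (u i)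
    ((lp.norm_apply_le_norm (zero_lt_one.trans_le Fact.out).ne' u i).trans hu)⟩

theorem memℓp (hf : LinearGrowthOnBounded f) (u : ℓ^p(ι, E)) : Memℓp (fun i => f i (u i)) p := by
  obtain ⟨C, -, h⟩ := hf.exists_forall_norm_apply_le (p := p) ‖u‖
  exact ((lp.memℓp u).norm.const_mul C).mono (h u le_rfl)

/-- The *Nemytskii* (superposition) operator `u ↦ (i ↦ f i (u i))` on `ℓᵖ`. -/
def nemytskii (hf : LinearGrowthOnBounded f) (u : ℓ^p(ι, E)) : ℓ^p(ι, G) :=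
  ⟨fun i => f i (u i), hf.memℓp u⟩

open Filter Topology in
theorem continuous_nemytskii (hf : LinearGrowthOnBounded f) (hcont : ∀ i, Continuous (f i))
    (hp : p ≠ ∞) : Continuous (hf.nemytskii : ℓ^p(ι, E) → ℓ^p(ι, G)) := by
  refine continuous_iff_continuousAt.2 fun u => ?_
  obtain ⟨C, hC, h⟩ := hf.exists_forall_norm_apply_le (p := p) (‖u‖ + 1)
  have hbdd : ∀ᶠ v in 𝓝 u, ‖v‖ ≤ ‖u‖ + 1 :=
    (continuous_norm.tendsto u).eventually_le_const (lt_add_one _)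
  refine tendsto_lp_of_norm_le hp hC tendsto_id ?_ (h u (lt_add_one _).le) fun i => ?_
  · filter_upwards [hbdd] with v hv using h v hv
  · exact (((hcont i).comp (continuous_apply i)).comp lp.uniformContinuous_coe.continuous).tendsto u

end LinearGrowthOnBounded

end Nemytskii

section Energy

open Filter Topology
open scoped lp RealInnerProductSpace

theorem exists_norm_sub_le_sub_eq_inner {E : Type*} [NormedAddCommGroup E] [InnerProductSpace ℝ E]
    [CompleteSpace E] {F : E → ℝ} {f : E → E} (hF : ∀ t, HasGradientAt F (f t) t) (s t : E) :
    ∃ ξ, ‖ξ - s‖ ≤ ‖t - s‖ ∧ F t - F s = ⟪f ξ, t - s⟫ := by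
  obtain ⟨ξ, hξ, h⟩ := domain_mvt (fun r _ => (hF r).hasFDerivAt.hasFDerivWithinAt) convex_univ
    (Set.mem_univ s) (Set.mem_univ t)
  exact ⟨ξ, norm_sub_le_of_mem_segment hξ, h⟩

variable {ι E K : Type*} [NormedAddCommGroup E] [InnerProductSpace ℝ E] [CompleteSpace E]
  {f : ι → E → E} {F : ι → E → ℝ}

theorem summable_primitive_apply (hf : LinearGrowthOnBounded f)
    (hF : ∀ i t, HasGradientAt (F i) (f i t) t) (hF0 : ∀ i, F i 0 = 0) (u : ℓ²(ι, E)) :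
    Summable fun i => F i (u i) := by
  choose ξ hξ hmean using fun i => exists_norm_sub_le_sub_eq_inner (hF i) 0 (u i)
  simp only [sub_zero, hF0] at hξ hmean
  let Ξ : ℓ²(ι, E) := ⟨ξ, (lp.memℓp u).mono' hξ⟩
  exact (lp.summable_inner (𝕜 := ℝ) (hf.nemytskii Ξ) u).congr fun i => (hmean i).symm

theorem hasGradientAt_tsum_primitive (hf : LinearGrowthOnBounded f)
    (hcont : ∀ i, Continuous (f i)) (hF : ∀ i t, HasGradientAt (F i) (f i t) t)
    (hF0 : ∀ i, F i 0 = 0) (u : ℓ²(ι, E)) :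
    HasGradientAt (fun u : ℓ²(ι, E) => ∑' i, F i (u i)) (hf.nemytskii u) u := by
  have hmean (v : ℓ²(ι, E)) : ∃ ξ : ℓ²(ι, E), ‖ξ - u‖ ≤ ‖v - u‖ ∧
      ∑' i, F i (v i) - ∑' i, F i (u i) = ⟪hf.nemytskii ξ, v - u⟫ := by
    choose ξ hξ hmean using fun i => exists_norm_sub_le_sub_eq_inner (hF i) (u i) (v i)
    let η : ℓ²(ι, E) := ⟨fun i => ξ i - u i, (lp.memℓp (v - u)).mono' hξ⟩
    have hη : (η + u : ℓ²(ι, E)) = ξ := funext fun i => sub_add_cancel (ξ i) (u i)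
    refine ⟨η + u, ?_, ?_⟩
    · rw [add_sub_cancel_right]
      exact lp.norm_mono two_ne_zero hξ
    · rw [← (summable_primitive_apply hf hF hF0 v).tsum_sub (summable_primitive_apply hf hF hF0 u),
        lp.inner_eq_tsum]
      refine tsum_congr fun i => (hmean i).trans ?_
      rw [← congrFun hη i]
      rfl
  choose ξ hξ hmean using hmean
  have hξ_tendsto : Tendsto ξ (𝓝 u) (𝓝 u) := by
    rw [tendsto_iff_norm_sub_tendsto_zero]
    exact squeeze_zero (fun v => norm_nonneg _) hξ (tendsto_norm_sub_self u)
  have hN : Tendsto (fun v => ‖hf.nemytskii (ξ v) - hf.nemytskii u‖) (𝓝 u) (𝓝 0) :=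
    tendsto_iff_norm_sub_tendsto_zero.1
      (((hf.continuous_nemytskii (p := 2) hcont ENNReal.ofNat_ne_top).tendsto u).comp hξ_tendsto)
  rw [hasGradientAt_iff_isLittleO, Asymptotics.isLittleO_iff]
  intro ε hε
  filter_upwards [hN.eventually_le_const hε] with v hv
  rw [hmean v, ← inner_sub_left]
  exact (norm_inner_le_norm _ _).trans (mul_le_mul_of_nonneg_right hv (norm_nonneg _))

variable [NormedAddCommGroup K] [InnerProductSpace ℝ K] (A : ℓ²(ι, E) →L[ℝ] K)

/-- The functional `u ↦ ½‖A u‖² − ∑ᵢ F i (u i)` of a semilinear variational problem on `ℓ²`, with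
the quadratic form factored through a linear map `A`. -/
noncomputable def semilinearEnergy (F : ι → E → ℝ) (u : ℓ²(ι, E)) : ℝ :=
  1 / 2 * ‖A u‖ ^ 2 - ∑' i, F i (u i)

theorem hasFDerivAt_semilinearEnergy (hf : LinearGrowthOnBounded f)
    (hcont : ∀ i, Continuous (f i)) (hF : ∀ i t, HasGradientAt (F i) (f i t) t)
    (hF0 : ∀ i, F i 0 = 0) (u : ℓ²(ι, E)) :
    HasFDerivAt (semilinearEnergy A F)
      ((innerSL ℝ (A u)).comp A - innerSL ℝ (hf.nemytskii u)) u := by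
  have hquad : HasFDerivAt (fun u => 1 / 2 * ‖A u‖ ^ 2) ((innerSL ℝ (A u)).comp A) u := by
    refine (A.hasFDerivAt.norm_sq.const_mul (1 / 2)).congr_fderiv ?_
    rw [← Nat.cast_smul_eq_nsmul ℝ, smul_smul]
    norm_num
  exact hquad.sub (hasGradientAt_tsum_primitive hf hcont hF hF0 u).hasFDerivAt

theorem contDiff_semilinearEnergy (hf : LinearGrowthOnBounded f)
    (hcont : ∀ i, Continuous (f i)) (hF : ∀ i t, HasGradientAt (F i) (f i t) t)
    (hF0 : ∀ i, F i 0 = 0) : ContDiff ℝ 1 (semilinearEnergy A F) := by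
  refine contDiff_one_iff_hasFDerivAt.2
    ⟨_, ?_, hasFDerivAt_semilinearEnergy A hf hcont hF hF0⟩
  exact (((innerSL ℝ).continuous.comp A.continuous).clm_comp continuous_const).sub
    ((innerSL ℝ).continuous.comp (hf.continuous_nemytskii hcont ENNReal.ofNat_ne_top))

theorem antitoneOn_fderiv_semilinearEnergy_smul_div (hf : LinearGrowthOnBounded f)
    (hcont : ∀ i, Continuous (f i)) (hF : ∀ i t, HasGradientAt (F i) (f i t) t)
    (hF0 : ∀ i, F i 0 = 0)
    (hmono : ∀ i e, MonotoneOn (fun t : ℝ => ⟪f i (t • e), e⟫ / t) (Set.Ioi 0)) (w : ℓ²(ι, E)) :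
    AntitoneOn (fun t : ℝ => fderiv ℝ (semilinearEnergy A F) (t • w) w / t) (Set.Ioi 0) := by
  have hval {t : ℝ} (ht : t ∈ Set.Ioi 0) : fderiv ℝ (semilinearEnergy A F) (t • w) w / t =
      ‖A w‖ ^ 2 - ⟪hf.nemytskii (t • w), w⟫ / t := by
    have hquad : ⟪A (t • w), A w⟫ = t * ‖A w‖ ^ 2 := by
      rw [map_smul, real_inner_smul_left, real_inner_self_eq_norm_sq]
    rw [(hasFDerivAt_semilinearEnergy A hf hcont hF hF0 (t • w)).fderiv,
      ← mul_div_cancel_left₀ (‖A w‖ ^ 2) (ne_of_gt ht), ← hquad, ← sub_div]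
    rfl
  intro s hs t ht hst
  simp only [hval hs, hval ht]
  exact sub_le_sub_left (hasSum_le (fun i => hmono i (w i) hs ht hst)
    ((lp.hasSum_inner (hf.nemytskii (s • w)) w).div_const s)
    ((lp.hasSum_inner (hf.nemytskii (t • w)) w).div_const t)) _

theorem monotoneOn_mul_div_of_monotoneOn_div_abs {g : ℝ → ℝ}
    (hneg : MonotoneOn (fun t => g t / |t|) (Set.Iio 0))
    (hpos : MonotoneOn (fun t => g t / |t|) (Set.Ioi 0)) (e : ℝ) :
    MonotoneOn (fun t => g (t * e) * e / t) (Set.Ioi 0) := by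
  have hrescale {t : ℝ} (ht : t ∈ Set.Ioi 0) :
      g (t * e) * e / t = g (t * e) / |t * e| * (e * |e|) := by
    rcases eq_or_ne e 0 with rfl | he
    · simp
    · have : |e| ≠ 0 := abs_ne_zero.2 he
      have : t ≠ 0 := ne_of_gt ht
      rw [abs_mul, abs_of_pos ht]
      field_simp
  intro s hs t ht hst
  simp only [hrescale hs, hrescale ht]
  rcases le_or_gt 0 e with he | he
  · rcases he.eq_or_lt with rfl | he
    · simp
    · exact mul_le_mul_of_nonneg_right
        (hpos (mul_pos hs he) (mul_pos ht he) (mul_le_mul_of_nonneg_right hst he.le))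
        (by positivity)
  · exact mul_le_mul_of_nonpos_right
      (hneg (mul_neg_of_pos_of_neg ht he) (mul_neg_of_pos_of_neg hs he)
        (mul_le_mul_of_nonpos_right hst he.le))
      (mul_nonpos_of_nonpos_of_nonneg he.le (abs_nonneg e))

end Energy

section Pullback

open scoped lp

variable {ι κ : Type*} {φ : κ → ι} {D : ℕ}

theorem sum_comp_le_mul_tsum (hφ : ∀ i, (φ ⁻¹' {i}).encard ≤ D) {g : ι → ℝ} (hg0 : ∀ i, 0 ≤ g i)
    (hg : Summable g) (S : Finset κ) : ∑ k ∈ S, g (φ k) ≤ D * ∑' i, g i := by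
  classical
  have hcard (i : ι) : {k ∈ S | φ k = i}.card ≤ D := by
    rw [← ENat.natCast_le_natCast, ← Set.encard_coe_eq_coe_finsetCard]
    refine (Set.encard_mono fun k hk => ?_).trans (hφ i)
    exact (Finset.mem_filter.1 hk).2
  calc ∑ k ∈ S, g (φ k) = ∑ i ∈ S.image φ, {k ∈ S | φ k = i}.card * g i := by
        simp only [Finset.sum_comp g φ, nsmul_eq_mul]
    _ ≤ ∑ i ∈ S.image φ, D * g i :=
        Finset.sum_le_sum fun i _ => mul_le_mul_of_nonneg_right (mod_cast hcard i) (hg0 i)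
    _ = D * ∑ i ∈ S.image φ, g i := (Finset.mul_sum ..).symm
    _ ≤ D * ∑' i, g i :=
        mul_le_mul_of_nonneg_left (hg.sum_le_tsum _ fun i _ => hg0 i) D.cast_nonneg

variable {p : ℝ≥0∞} {E : Type*} [NormedAddCommGroup E]

theorem sum_rpow_norm_comp_le (hp : 0 < p.toReal) (hφ : ∀ i, (φ ⁻¹' {i}).encard ≤ D)
    (u : ℓ^p(ι, E)) (S : Finset κ) :
    ∑ k ∈ S, ‖u (φ k)‖ ^ p.toReal ≤ D * ‖u‖ ^ p.toReal := by
  rw [lp.norm_rpow_eq_tsum hp]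
  exact sum_comp_le_mul_tsum hφ (fun i => by positivity) ((lp.memℓp u).summable hp) S

variable (𝕜 : Type*) [NormedField 𝕜] [NormedSpace 𝕜 E] [Fact (1 ≤ p)]

/-- Composition with `φ : κ → ι`, as an operator `ℓᵖ(ι) → ℓᵖ(κ)`. It is bounded when `p < ∞` since
the fibres of `φ` have at most `D` elements. -/
noncomputable def lpPullback (hp : 0 < p.toReal) (hφ : ∀ i, (φ ⁻¹' {i}).encard ≤ D) :
    ℓ^p(ι, E) →L[𝕜] ℓ^p(κ, E) :=
  LinearMap.mkContinuous
    { toFun u := ⟨fun k => u (φ k), memℓp_gen' (sum_rpow_norm_comp_le hp hφ u)⟩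
      map_add' _ _ := rfl
      map_smul' _ _ := rfl }
    ((D : ℝ) ^ p.toReal⁻¹) fun u => by
      refine lp.norm_le_of_forall_sum_le hp (by positivity) fun S => ?_
      rw [Real.mul_rpow (by positivity) (norm_nonneg u), Real.rpow_inv_rpow D.cast_nonneg hp.ne']
      exact sum_rpow_norm_comp_le hp hφ u S

end Pullback

section DirichletForm

open scoped lp

theorem hasSum_sq_apply {ι : Type*} (u : ℓ²(ι, ℝ)) : HasSum (fun i => u i ^ 2) (‖u‖ ^ 2) := by
  simpa only [ENNReal.toReal_ofNat, Real.rpow_ofNat, Real.norm_eq_abs, sq_abs] using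
    lp.hasSum_norm (by norm_num) u

variable {Vtx : Type*} {adj : Vtx → Vtx → Prop} {D : ℕ}

theorem encard_preimage_source_le (hout : ∀ x, {y | adj x y}.encard ≤ D) (x : Vtx) :
    ((fun e : Σ x, {y // adj x y} => e.1) ⁻¹' {x}).encard ≤ D := by
  refine (Set.encard_le_encard_of_injOn (f := fun e => e.2.1) ?_ ?_).trans (hout x)
  · rintro ⟨_, y, hy⟩ rfl
    exact hy
  · rintro ⟨_, y, hy⟩ rfl ⟨_, z, hz⟩ rfl (rfl : y = z)
    rfl

theorem encard_preimage_target_le (hin : ∀ y, {x | adj x y}.encard ≤ D) (y : Vtx) :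
    ((fun e : Σ x, {y // adj x y} => e.2.1) ⁻¹' {y}).encard ≤ D := by
  refine (Set.encard_le_encard_of_injOn (f := fun e => e.1) ?_ ?_).trans (hin y)
  · rintro ⟨x, _, hx⟩ rfl
    exact hx
  · rintro ⟨x, _, hx⟩ rfl ⟨z, _, hz⟩ rfl (rfl : x = z)
    rfl

/-- The discrete gradient `u ↦ (u y − u x)`, as an operator from functions on the vertices to
functions on the oriented edges `(x, y)` of a graph with bounded out- and in-degrees. -/
noncomputable def discreteGradient (hout : ∀ x, {y | adj x y}.encard ≤ D)
    (hin : ∀ y, {x | adj x y}.encard ≤ D) : ℓ²(Vtx, ℝ) →L[ℝ] ℓ²(Σ x, {y // adj x y}, ℝ) :=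
  lpPullback ℝ (by norm_num) (encard_preimage_target_le hin) -
    lpPullback ℝ (by norm_num) (encard_preimage_source_le hout)

theorem discreteGradient_apply (hout : ∀ x, {y | adj x y}.encard ≤ D)
    (hin : ∀ y, {x | adj x y}.encard ≤ D) (u : ℓ²(Vtx, ℝ)) (e : Σ x, {y // adj x y}) :
    discreteGradient hout hin u e = u e.2.1 - u e.1 := rfl

theorem hasSum_gradSq (hout : ∀ x, {y | adj x y}.encard ≤ D)
    (hin : ∀ y, {x | adj x y}.encard ≤ D) (u : ℓ²(Vtx, ℝ)) :
    HasSum (gradSq adj u) (1 / 2 * ‖discreteGradient hout hin u‖ ^ 2) := by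
  have hedge : HasSum (fun e : Σ x, {y // adj x y} => (u e.2.1 - u e.1) ^ 2)
      (‖discreteGradient hout hin u‖ ^ 2) := by
    simpa only [discreteGradient_apply] using hasSum_sq_apply (discreteGradient hout hin u)
  have hvertex := hedge.sigma fun x => (hedge.summable.sigma_factor x).hasSum
  refine (hvertex.mul_left (1 / 2)).congr_fun fun x => ?_
  simp only [gradSq, gammaProd, sq]

variable {Vp : Vtx → ℝ} {C : ℝ}

/-- Multiplication by `√V` on `ℓ²`, through which the potential part `∑ V u²` of the quadratic form
becomes a squared norm. -/
noncomputable def mulSqrt (hV : ∀ x, Vp x ≤ C) : ℓ²(Vtx, ℝ) →L[ℝ] ℓ²(Vtx, ℝ) :=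
  lp.mapCLM 2 (fun x => √(Vp x) • ContinuousLinearMap.id ℝ ℝ) (Real.sqrt_nonneg C) fun x => by
    rw [norm_smul, ContinuousLinearMap.norm_id, mul_one, Real.norm_of_nonneg (Real.sqrt_nonneg _)]
    exact Real.sqrt_le_sqrt (hV x)

theorem mulSqrt_apply (hV : ∀ x, Vp x ≤ C) (u : ℓ²(Vtx, ℝ)) (x : Vtx) :
    mulSqrt hV u x = √(Vp x) * u x := rfl

theorem hasSum_mul_sq (hV0 : ∀ x, 0 ≤ Vp x) (hV : ∀ x, Vp x ≤ C) (u : ℓ²(Vtx, ℝ)) :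
    HasSum (fun x => Vp x * u x ^ 2) (‖mulSqrt hV u‖ ^ 2) := by
  simpa only [mulSqrt_apply, mul_pow, Real.sq_sqrt (hV0 _)] using hasSum_sq_apply (mulSqrt hV u)

/-- The map `u ↦ (∇u / √2, √V u)`, which turns the `V`-norm into the Hilbert norm of its target. -/
noncomputable def dirichletMap (hout : ∀ x, {y | adj x y}.encard ≤ D)
    (hin : ∀ y, {x | adj x y}.encard ≤ D) (hV : ∀ x, Vp x ≤ C) :
    ℓ²(Vtx, ℝ) →L[ℝ] WithLp 2 (ℓ²(Σ x, {y // adj x y}, ℝ) × ℓ²(Vtx, ℝ)) :=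
  (WithLp.prodContinuousLinearEquiv 2 ℝ _ _).symm.toContinuousLinearMap.comp
    (((√2)⁻¹ • discreteGradient hout hin).prod (mulSqrt hV))

variable (hout : ∀ x, {y | adj x y}.encard ≤ D) (hin : ∀ y, {x | adj x y}.encard ≤ D)
  (hV : ∀ x, Vp x ≤ C)

theorem norm_sq_dirichletMap (hV0 : ∀ x, 0 ≤ Vp x) (u : ℓ²(Vtx, ℝ)) :
    ‖dirichletMap hout hin hV u‖ ^ 2 = ∑' x, (gradSq adj u x + Vp x * u x ^ 2) := by
  rw [((hasSum_gradSq hout hin u).add (hasSum_mul_sq hV0 hV u)).tsum_eq,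
    WithLp.prod_norm_sq_eq_of_L2]
  change ‖(√2)⁻¹ • discreteGradient hout hin u‖ ^ 2 + ‖mulSqrt hV u‖ ^ 2 = _
  rw [norm_smul, mul_pow, Real.norm_eq_abs, sq_abs, inv_pow, Real.sq_sqrt zero_le_two, one_div]

theorem nrmH_eq_norm_dirichletMap (hV0 : ∀ x, 0 ≤ Vp x) (u : H1 Vtx) :
    nrmH adj Vp u = ‖dirichletMap hout hin hV u‖ := by
  rw [nrmH, nrmV, ← norm_sq_dirichletMap hout hin hV hV0, Real.sqrt_sq (norm_nonneg _)]

theorem PhiF_eq_semilinearEnergy (hV0 : ∀ x, 0 ≤ Vp x) (F : Vtx → ℝ → ℝ) :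
    PhiF adj Vp F = semilinearEnergy (dirichletMap hout hin hV) F := by
  funext u
  rw [PhiF, semilinearEnergy, norm_sq_dirichletMap hout hin hV hV0]

theorem dirichletMap_ne_zero (hV0 : ∀ x, 0 < Vp x) {u : ℓ²(Vtx, ℝ)} (hu : u ≠ 0) :
    dirichletMap hout hin hV u ≠ 0 := by
  refine fun h => hu (lp.ext (funext fun x => ?_))
  have hmul : mulSqrt hV u = 0 := congrArg WithLp.snd h
  have hx : √(Vp x) * u x = 0 := by rw [← mulSqrt_apply hV, hmul, lp.coeFn_zero, Pi.zero_apply]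
  exact (mul_eq_zero.1 hx).resolve_left (Real.sqrt_pos.2 (hV0 x)).ne'

end DirichletForm

theorem stmt12_general
    {Vtx : Type*} (adj : Vtx → Vtx → Prop) (D : ℕ)
    (hout : ∀ x, {y | adj x y}.encard ≤ D)
    (hin : ∀ y, {x | adj x y}.encard ≤ D)
    (Vp : Vtx → ℝ) (C : ℝ) (hVpos : ∀ x, 0 < Vp x) (hVle : ∀ x, Vp x ≤ C)
    (f : Vtx → ℝ → ℝ) (hcont : ∀ x, Continuous (f x)) (hf : LinearGrowthOnBounded f)
    (hmono : ∀ x, MonotoneOn (fun t => f x t / |t|) (Set.Iio 0) ∧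
      MonotoneOn (fun t => f x t / |t|) (Set.Ioi 0))
    (F : Vtx → ℝ → ℝ) (hF : ∀ x t, F x t = ∫ s in (0 : ℝ)..t, f x s)
    (sw : H1 Vtx → ℝ)
    (hsw : ∀ w : H1 Vtx, w ≠ 0 → 0 < sw w ∧
      fderiv ℝ (PhiF adj Vp F) (sw w • w) (sw w • w) = 0 ∧
      ∀ s : ℝ, 0 < s → fderiv ℝ (PhiF adj Vp F) (s • w) (s • w) = 0 → s = sw w) :
    ContDiffOn ℝ 1 (fun w : H1 Vtx => PhiF adj Vp F (sw w • w)) {w : H1 Vtx | w ≠ 0} ∧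
    ∀ w : H1 Vtx, w ≠ 0 → ∀ z : H1 Vtx,
      fderiv ℝ (fun v : H1 Vtx => PhiF adj Vp F (sw v • v)) w z =
        (nrmH adj Vp (sw w • w) / nrmH adj Vp w) *
          fderiv ℝ (PhiF adj Vp F) (sw w • w) z := by
  have hVnonneg : ∀ x, 0 ≤ Vp x := fun x => (hVpos x).le
  let A := dirichletMap hout hin hVle
  have hF0 (x : Vtx) : F x 0 = 0 := by rw [hF, intervalIntegral.integral_same]
  have hgrad (x : Vtx) (t : ℝ) : HasGradientAt (F x) (f x t) t := by
    rw [funext (hF x)]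
    exact ((hcont x).integral_hasStrictDerivAt 0 t).hasDerivAt.hasGradientAt'
  rw [PhiF_eq_semilinearEnergy hout hin hVle hVnonneg] at hsw ⊢
  have hC1 : ContDiff ℝ 1 (semilinearEnergy A F) := contDiff_semilinearEnergy A hf hcont hgrad hF0
  have hs : IsNehariScaling (semilinearEnergy A F) sw := by
    refine .of_antitoneOn (fun w _ => ?_) hsw
    refine antitoneOn_fderiv_semilinearEnergy_smul_div A hf hcont hgrad hF0 (fun x e => ?_) w
    simpa [mul_comm] using monotoneOn_mul_div_of_monotoneOn_div_abs (hmono x).1 (hmono x).2 e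
  refine ⟨hs.contDiffOn hC1, fun w hw z => ?_⟩
  have hnorm : nrmH adj Vp (sw w • w) / nrmH adj Vp w = sw w := by
    rw [nrmH_eq_norm_dirichletMap hout hin hVle hVnonneg,
      nrmH_eq_norm_dirichletMap hout hin hVle hVnonneg, map_smul, norm_smul,
      Real.norm_of_nonneg (hs.pos w hw).le,
      mul_div_cancel_right₀ _ (norm_ne_zero_iff.2 (dirichletMap_ne_zero hout hin hVle hVpos hw))]
  rw [hnorm, (hs.hasFDerivAt hC1 hw).fderiv]
  rfl

/-- Proposition 3.5: `Ψ̂(w) = Φ(m̂(w))` is `C¹` on `H¹\{0}` and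
`Ψ̂'(w)z = (‖m̂(w)‖/‖w‖)·Φ'(m̂(w))z`. -/
theorem stmt12
    {Vtx : Type*} (adj : Vtx → Vtx → Prop) (D : ℕ)
    (hsym : ∀ x y, adj x y → adj y x)
    (hirr : ∀ x, ¬ adj x x)
    (hfin : ∀ x, {y | adj x y}.Finite)
    (hdeg : ∀ x, {y | adj x y}.ncard ≤ D)
    (Vp : Vtx → ℝ) (C1 C2 : ℝ) (hC1 : 0 < C1)
    (hVbd : ∀ x, C1 ≤ Vp x ∧ Vp x ≤ C2)
    (f : Vtx → ℝ → ℝ) (hcont : ∀ x, Continuous (f x))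
    (a q : ℝ) (ha : 0 < a) (hq : 2 < q)
    (hgrowth : ∀ x t, |f x t| ≤ a * (|t| + |t| ^ (q - 1)))
    (hsmall : ∀ ε > 0, ∃ δ > 0, ∀ x t, t ≠ 0 → |t| < δ → |f x t| ≤ ε * |t|)
    (hmono : ∀ x, StrictMonoOn (fun t => f x t / |t|) (Set.Iio 0) ∧
             StrictMonoOn (fun t => f x t / |t|) (Set.Ioi 0))
    (F : Vtx → ℝ → ℝ) (hF : ∀ x t, F x t = ∫ s in (0:ℝ)..t, f x s)
    (hsuper : ∀ M : ℝ, ∃ R > 0, ∀ x t, R ≤ |t| → M ≤ F x t / t ^ 2)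
    (sw : H1 Vtx → ℝ)
    (hsw : ∀ w : H1 Vtx, w ≠ 0 → 0 < sw w ∧
      fderiv ℝ (PhiF adj Vp F) (sw w • w) (sw w • w) = 0 ∧
      ∀ s : ℝ, 0 < s → fderiv ℝ (PhiF adj Vp F) (s • w) (s • w) = 0 → s = sw w)
    :
    ContDiffOn ℝ 1 (fun w : H1 Vtx => PhiF adj Vp F (sw w • w)) {w : H1 Vtx | w ≠ 0} ∧
    ∀ w : H1 Vtx, w ≠ 0 → ∀ z : H1 Vtx,
      fderiv ℝ (fun v : H1 Vtx => PhiF adj Vp F (sw v • v)) w z =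
        (nrmH adj Vp (sw w • w) / nrmH adj Vp w) *
          fderiv ℝ (PhiF adj Vp F) (sw w • w) z := by
  have hdeg' (x : Vtx) : {y | adj x y}.encard ≤ D :=
    Set.encard_le_coe_iff_finite_ncard_le.2 ⟨hfin x, hdeg x⟩
  exact stmt12_general adj D hdeg' (fun y => (Set.encard_mono fun x => hsym x y).trans (hdeg' y))
    Vp C2 (fun x => hC1.trans_le (hVbd x).1) (fun x => (hVbd x).2) f hcont
    (linearGrowthOnBounded_of_le_add_rpow ha.le hq.le hgrowth)
    (fun x => ⟨(hmono x).1.monotoneOn, (hmono x).2.monotoneOn⟩) F hF sw hsw
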